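/- Under the hypotheses of the previous statement, with w₁ ≠ w₂ eigenvalues of PAP↾ran P, one has Re((w₁−z₁)(z̄₀−z̄₁))/|z₁−z₀|² + Re((w₂−z₁)(z̄₀−z̄₁))/|z₁−z₀|² ≤ 1. -/

import Mathlib

open ContinuousLinearMap

/-!
Let `E` be the orthogonal projection onto the `z₀`-eigenspace of `A`. The affine map
`t z = (z - z₁) / (z₀ - z₁)` sends `z₀` to `1`, and it sends the rest of the spectrum into the half
plane `Re ≤ 0` because `z₁` is the point of the convex set `C` nearest to `z₀`. The functional
calculus turns this into the operator inequality `Re t(A) ≤ E`. Compressing `t(A)` to the span of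
the eigenvectors `η i` of the compression of `A` and taking traces gives
`∑ Re t(w i) ≤ dim ran E`.
-/

open scoped InnerProductSpace ComplexOrder ComplexStarModule

section FunctionalCalculus

theorem mul_cfc_eq_smul_cfc_of_eq_zero {R A : Type*} {p : A → Prop} [CommSemiring R] [StarRing R]
    [MetricSpace R] [IsTopologicalSemiring R] [ContinuousStar R] [Ring A] [StarRing A]
    [TopologicalSpace A] [Algebra R A] [ContinuousFunctionalCalculus R A p] {a : A} (ha : p a)
    {r : R} {f : R → R} (hf : ContinuousOn f (spectrum R a))
    (hf₀ : ∀ x ∈ spectrum R a, x ≠ r → f x = 0) :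
    a * cfc f a = r • cfc f a := by
  calc a * cfc f a = cfc (fun x ↦ x * f x) a := by rw [cfc_mul (fun x ↦ x) f a, cfc_id' R a]
    _ = cfc (fun x ↦ r * f x) a := by
      refine cfc_congr fun x hx ↦ ?_
      obtain rfl | hxr := eq_or_ne x r
      · rfl
      · simp [hf₀ x hx hxr]
    _ = r • cfc f a := cfc_const_mul r f a

theorem cfc_sub_div_const {𝕜 A : Type*} {p : A → Prop} [RCLike 𝕜] [Ring A] [StarRing A]
    [TopologicalSpace A] [Algebra 𝕜 A] [ContinuousFunctionalCalculus 𝕜 A p] {a : A} (ha : p a)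
    (c d : 𝕜) :
    cfc (fun z ↦ (z - c) / d) a = d⁻¹ • (a - algebraMap 𝕜 A c) := by
  simp only [div_eq_inv_mul]
  rw [cfc_const_mul d⁻¹ (fun z ↦ z - c) a, cfc_sub (fun z ↦ z) (fun _ ↦ c) a, cfc_id' 𝕜 a,
    cfc_const c a]

theorem realPart_cfc {A : Type*} [TopologicalSpace A] [Ring A] [StarRing A] [Algebra ℂ A]
    [StarModule ℂ A] [ContinuousFunctionalCalculus ℂ A IsStarNormal] [ContinuousMap.UniqueHom ℂ A]
    {a : A} (ha : IsStarNormal a) {f : ℂ → ℂ} (hf : ContinuousOn f (spectrum ℂ a)) :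
    (ℜ (cfc f a) : A) = cfc (fun z ↦ ((f z).re : ℂ)) a := by
  rw [← cfc_re_id (cfc f a), ← cfc_comp' (fun z : ℂ ↦ (z.re : ℂ)) f a]

theorem isStarProjection_cfc {A : Type*} [TopologicalSpace A] [Ring A] [StarRing A] [Algebra ℂ A]
    [ContinuousFunctionalCalculus ℂ A IsStarNormal]
    [NonUnitalContinuousFunctionalCalculus ℂ A IsStarNormal]
    {a : A} (ha : IsStarNormal a) {f : ℂ → ℂ} (hf : ContinuousOn f (spectrum ℂ a))
    (hf₀₁ : ∀ z ∈ spectrum ℂ a, f z = 0 ∨ f z = 1) :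
    IsStarProjection (cfc f a) := by
  refine isStarProjection_iff_spectrum_subset_and_isStarNormal.2 ⟨?_, cfc_predicate f a⟩
  rw [cfc_map_spectrum f a]
  rintro _ ⟨z, hz, rfl⟩
  exact hf₀₁ z hz

end FunctionalCalculus

section Eigenspace

theorem le_starProjection_of_isStarProjection {𝕜 F : Type*} [RCLike 𝕜] [NormedAddCommGroup F]
    [InnerProductSpace 𝕜 F] [CompleteSpace F] {E : F →L[𝕜] F} (hE : IsStarProjection E)
    {K : Submodule 𝕜 F} [K.HasOrthogonalProjection] (hEK : ∀ x, E x ∈ K) :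
    E ≤ K.starProjection := by
  obtain ⟨U, _, rfl⟩ := isStarProjection_iff_eq_starProjection.1 hE
  refine Submodule.starProjection_le_starProjection_iff.2 fun x hx ↦ ?_
  simpa only [Submodule.starProjection_eq_self_iff.2 hx] using hEK x

theorem realPart_cfc_le_starProjection_eigenspace {H : Type*} [NormedAddCommGroup H]
    [InnerProductSpace ℂ H] [CompleteSpace H] {A : H →L[ℂ] H} (hA : IsStarNormal A) {z₀ : ℂ}
    [(Module.End.eigenspace (A : H →ₗ[ℂ] H) z₀).HasOrthogonalProjection] {t : ℂ → ℂ}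
    (ht : ContinuousOn t (spectrum ℂ A)) (ht₀ : t z₀ = 1)
    (ht_re : ∀ z ∈ spectrum ℂ A, z ≠ z₀ → (t z).re ≤ 0) :
    (ℜ (cfc t A) : H →L[ℂ] H) ≤
      (Module.End.eigenspace (A : H →ₗ[ℂ] H) z₀).starProjection := by
  -- On the spectrum, the positive part of `Re t` is the indicator function of `z₀`.
  let f : ℂ → ℂ := fun z ↦ ((max 0 (t z).re : ℝ) : ℂ)
  have hf : ContinuousOn f (spectrum ℂ A) := by fun_prop
  have hf₁ : f z₀ = 1 := by simp [f, ht₀]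
  have hf₀ : ∀ z ∈ spectrum ℂ A, z ≠ z₀ → f z = 0 := fun z hz hne ↦ by
    simp [f, ht_re z hz hne]
  have hE : IsStarProjection (cfc f A) := isStarProjection_cfc hA hf fun z hz ↦ by
    obtain rfl | hne := eq_or_ne z z₀
    · exact .inr hf₁
    · exact .inl (hf₀ z hz hne)
  calc (ℜ (cfc t A) : H →L[ℂ] H) = cfc (fun z ↦ ((t z).re : ℂ)) A := realPart_cfc hA ht
    _ ≤ cfc f A := cfc_mono fun z _ ↦ by simp [f]
    _ ≤ _ := le_starProjection_of_isStarProjection hE fun x ↦ Module.End.mem_eigenspace_iff.2 <|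
      DFunLike.congr_fun (mul_cfc_eq_smul_cfc_of_eq_zero hA hf hf₀) x

end Eigenspace

section Compression

variable {𝕜 E : Type*} [RCLike 𝕜] [NormedAddCommGroup E] [InnerProductSpace 𝕜 E]

/-- The compression `Q T|_V` of an operator `T` to a subspace `V`, where `Q` is the orthogonal
projection onto `V`. -/
noncomputable def compression (V : Submodule 𝕜 E) [V.HasOrthogonalProjection] (T : E →L[𝕜] E) :
    V →ₗ[𝕜] V :=
  (V.orthogonalProjectionOnto ∘L T ∘L V.subtypeL : V →L[𝕜] V)

theorem inner_compression_apply {V : Submodule 𝕜 E} [V.HasOrthogonalProjection] (T : E →L[𝕜] E)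
    (x y : V) : ⟪x, compression V T y⟫_𝕜 = ⟪(x : E), T y⟫_𝕜 :=
  Submodule.inner_orthogonalProjectionOnto_eq_of_mem_left x (T y)

theorem trace_eq_sum_of_apply_basis {R M ι : Type*} [CommRing R] [AddCommGroup M] [Module R M]
    [Fintype ι] (b : Module.Basis ι R M) {f : M →ₗ[R] M} {μ : ι → R}
    (hf : ∀ i, f (b i) = μ i • b i) : LinearMap.trace R M f = ∑ i, μ i := by
  classical
  simp [LinearMap.trace_eq_matrix_trace R b, Matrix.trace, LinearMap.toMatrix_apply, hf]

theorem trace_compression_eq_sum {ι : Type*} [Fintype ι] {V : Submodule 𝕜 E}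
    [V.HasOrthogonalProjection] (b : Module.Basis ι 𝕜 V) {T : E →L[𝕜] E} {μ : ι → 𝕜}
    (hT : ∀ i j, ⟪(b i : E), T (b j)⟫_𝕜 = μ j * ⟪(b i : E), b j⟫_𝕜) :
    LinearMap.trace 𝕜 V (compression V T) = ∑ i, μ i :=
  trace_eq_sum_of_apply_basis b fun j ↦ InnerProductSpace.ext_inner_left_basis b fun i ↦ by
    rw [inner_compression_apply, hT, inner_smul_right, Submodule.coe_inner]

theorem sum_norm_sq_orthogonalProjectionOnto_le_finrank {ι : Type*} [Fintype ι] {e : ι → E}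
    (he : Orthonormal 𝕜 e) (K : Submodule 𝕜 E) [FiniteDimensional 𝕜 K] :
    ∑ i, ‖K.orthogonalProjectionOnto (e i)‖ ^ 2 ≤ Module.finrank 𝕜 K := by
  let b := stdOrthonormalBasis 𝕜 K
  calc ∑ i, ‖K.orthogonalProjectionOnto (e i)‖ ^ 2
      = ∑ i, ∑ j, ‖⟪e i, b j⟫_𝕜‖ ^ 2 := by
        simp only [← b.sum_sq_norm_inner_left (K.orthogonalProjectionOnto (e _)),
          Submodule.inner_orthogonalProjectionOnto_eq_of_mem_right]
    _ = ∑ j, ∑ i, ‖⟪e i, b j⟫_𝕜‖ ^ 2 := Finset.sum_comm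
    _ ≤ ∑ j, ‖(b j : E)‖ ^ 2 := Finset.sum_le_sum fun j _ ↦ he.sum_inner_products_le (b j : E)
    _ = Module.finrank 𝕜 K := by simp [← Submodule.coe_norm]

end Compression

section Trace

variable {H : Type*} [NormedAddCommGroup H] [InnerProductSpace ℂ H] [CompleteSpace H]

theorem re_inner_realPart_apply (T : H →L[ℂ] H) (x : H) :
    (⟪(ℜ T : H →L[ℂ] H) x, x⟫_ℂ).re = (⟪T x, x⟫_ℂ).re := by
  have h_symm : (⟪x, T x⟫_ℂ).re = (⟪T x, x⟫_ℂ).re := inner_re_symm (𝕜 := ℂ) x (T x)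
  simp only [realPart_apply_coe, star_eq_adjoint, smul_apply, add_apply, inner_smul_left_eq_smul,
    inner_add_left, adjoint_inner_left, Complex.smul_re, Complex.add_re, smul_eq_mul, h_symm]
  ring

theorem re_trace_compression_le_finrank {T : H →L[ℂ] H} {K : Submodule ℂ H}
    [FiniteDimensional ℂ K] (hTK : (ℜ T : H →L[ℂ] H) ≤ K.starProjection)
    (V : Submodule ℂ H) [FiniteDimensional ℂ V] :
    (LinearMap.trace ℂ V (compression V T)).re ≤ Module.finrank ℂ K := by
  let e := stdOrthonormalBasis ℂ V
  have h_re_inner_le (x : H) : (⟪x, T x⟫_ℂ).re ≤ ‖K.orthogonalProjectionOnto x‖ ^ 2 := by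
    have h := ((le_def _ _).1 hTK).re_inner_nonneg_left x
    rw [sub_apply, inner_sub_left, map_sub, sub_nonneg, K.re_inner_starProjection_eq_normSq x,
      RCLike.re_to_complex, re_inner_realPart_apply] at h
    exact (inner_re_symm (𝕜 := ℂ) x (T x)).trans_le h
  calc (LinearMap.trace ℂ V (compression V T)).re
      = ∑ i, (⟪(e i : H), T (e i)⟫_ℂ).re := by
        simp only [LinearMap.trace_eq_sum_inner _ e, inner_compression_apply, Complex.re_sum]
    _ ≤ ∑ i, ‖K.orthogonalProjectionOnto (e i : H)‖ ^ 2 :=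
      Finset.sum_le_sum fun i _ ↦ h_re_inner_le (e i)
    _ ≤ Module.finrank ℂ K :=
      sum_norm_sq_orthogonalProjectionOnto_le_finrank
        (e.orthonormal.comp_linearIsometry V.subtypeₗᵢ) K

end Trace

section NearestPoint

theorem inner_sub_sub_nonpos_of_forall_norm_sub_le {F : Type*} [NormedAddCommGroup F]
    [InnerProductSpace ℝ F] {K : Set F} (hK : Convex ℝ K) {u v : F} (hv : v ∈ K)
    (hmin : ∀ w ∈ K, ‖u - v‖ ≤ ‖u - w‖) {w : F} (hw : w ∈ K) : ⟪u - v, w - v⟫_ℝ ≤ 0 := by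
  have : Nonempty K := ⟨⟨v, hv⟩⟩
  have hbdd : BddBelow (Set.range fun w : K ↦ ‖u - w‖) :=
    ⟨0, Set.forall_mem_range.2 fun _ ↦ norm_nonneg _⟩
  have hinf : ‖u - v‖ = ⨅ w : K, ‖u - w‖ :=
    le_antisymm (le_ciInf fun w ↦ hmin w w.2) (ciInf_le hbdd ⟨v, hv⟩)
  exact (norm_eq_iInf_iff_real_inner_le_zero hK hv).1 hinf w hw

theorem re_div_eq_re_mul_conj_div_norm_sq (z w : ℂ) :
    (z / w).re = (z * (starRingEnd ℂ) w).re / ‖w‖ ^ 2 := by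
  rw [div_eq_mul_inv, Complex.inv_def, Complex.normSq_eq_norm_sq, ← mul_assoc,
    Complex.re_mul_ofReal, div_eq_mul_inv]

theorem re_div_nonpos_of_nearest {C : Set ℂ} (hC : Convex ℝ C) {z₀ z₁ : ℂ} (hz₁ : z₁ ∈ C)
    (hmin : ∀ w ∈ C, ‖z₀ - z₁‖ ≤ ‖z₀ - w‖) {z : ℂ} (hz : z ∈ C) :
    ((z - z₁) / (z₀ - z₁)).re ≤ 0 := by
  rw [re_div_eq_re_mul_conj_div_norm_sq]
  refine div_nonpos_of_nonpos_of_nonneg ?_ (sq_nonneg _)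
  simpa only [Complex.inner] using inner_sub_sub_nonpos_of_forall_norm_sub_le hC hz₁ hmin hz

end NearestPoint

theorem stmt_6_general {H : Type*} [NormedAddCommGroup H] [InnerProductSpace ℂ H] [CompleteSpace H]
    (A : H →L[ℂ] H) (hA : IsStarNormal A) (z₀ : ℂ) (m : ℕ)
    (hm : Module.rank ℂ (Module.End.eigenspace (A : H →ₗ[ℂ] H) z₀) ≤ m)
    (C : Set ℂ) (hC : C = closure (convexHull ℝ (spectrum ℂ A \ {z₀}))) (hz₀C : z₀ ∉ C)
    (z₁ : ℂ) (hz₁ : z₁ ∈ C) (hz₁min : ∀ w ∈ C, ‖z₀ - z₁‖ ≤ ‖z₀ - w‖)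
    (P : H →L[ℂ] H) (hPsa : ContinuousLinearMap.adjoint P = P)
    {ι : Type*} [Fintype ι] (w : ι → ℂ) (η : ι → H) (hη : LinearIndependent ℂ η)
    (hPη : ∀ i, P (η i) = η i) (heig : ∀ i, P (A (η i)) = w i • η i) :
    ∑ i, ((w i - z₁) * (starRingEnd ℂ) (z₀ - z₁)).re / ‖z₁ - z₀‖ ^ 2 ≤ m := by
  let K := Module.End.eigenspace (A : H →ₗ[ℂ] H) z₀
  have : FiniteDimensional ℂ K :=
    Module.rank_lt_aleph0_iff.1 (hm.trans_lt Cardinal.natCast_lt_aleph0)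
  let V := Submodule.span ℂ (Set.range η)
  have : FiniteDimensional ℂ V := .span_of_finite ℂ (Set.finite_range η)
  let t : ℂ → ℂ := fun z ↦ (z - z₁) / (z₀ - z₁)
  have ht₀ : t z₀ = 1 := div_self (sub_ne_zero.2 fun h ↦ hz₀C (h ▸ hz₁))
  have hC_conv : Convex ℝ C := hC ▸ (convex_convexHull ℝ _).closure
  have ht_re (z) (hz : z ∈ spectrum ℂ A) (hne : z ≠ z₀) : (t z).re ≤ 0 :=
    re_div_nonpos_of_nearest hC_conv hz₁ hz₁min
      (hC ▸ subset_closure (subset_convexHull ℝ _ ⟨hz, hne⟩))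
  have h_inner_A (i j) : ⟪η i, A (η j)⟫_ℂ = w j * ⟪η i, η j⟫_ℂ := by
    rw [← inner_smul_right, ← heig, ← adjoint_inner_left P, hPsa, hPη]
  have h_inner_tA (i j) : ⟪η i, cfc t A (η j)⟫_ℂ = t (w j) * ⟪η i, η j⟫_ℂ := by
    rw [cfc_sub_div_const hA, Algebra.algebraMap_eq_smul_one]
    simp only [smul_apply, sub_apply, one_apply_eq_self, inner_smul_right, inner_sub_right,
      h_inner_A, t]
    ring
  calc ∑ i, ((w i - z₁) * (starRingEnd ℂ) (z₀ - z₁)).re / ‖z₁ - z₀‖ ^ 2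
      = (∑ i, t (w i)).re := by
        simp only [Complex.re_sum, t, re_div_eq_re_mul_conj_div_norm_sq, norm_sub_rev z₁ z₀]
    _ = (LinearMap.trace ℂ _ (compression V (cfc t A))).re := by
        rw [trace_compression_eq_sum (Module.Basis.span hη) (T := cfc t A) (μ := fun i ↦ t (w i))]
        simpa only [Module.Basis.span_apply] using h_inner_tA
    _ ≤ Module.finrank ℂ K := re_trace_compression_le_finrank
        (realPart_cfc_le_starProjection_eigenspace hA (by fun_prop) ht₀ ht_re) _
    _ ≤ m := mod_cast Module.finrank_le_of_rank_le hm

/-- Under the hypotheses of Theorem A.2.3, with `w₁ ≠ w₂` eigenvalues of `PAP` on `ran P`,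
one has `(w₁−z₁)·(z₀−z₁)/|z₁−z₀|² + (w₂−z₁)·(z₀−z₁)/|z₁−z₀|² ≤ 1`, where `x·y = Re(x ȳ)`. -/
theorem stmt_6 {H : Type*} [NormedAddCommGroup H] [InnerProductSpace ℂ H] [CompleteSpace H]
    (A : H →L[ℂ] H) (hA : IsStarNormal A)
    (z₀ : ℂ) (φ : H) (hφ : φ ≠ 0) (hAφ : A φ = z₀ • φ)
    (hsimple : ∀ ψ : H, A ψ = z₀ • ψ → ∃ c : ℂ, ψ = c • φ)
    (C : Set ℂ) (hC : C = closure (convexHull ℝ (spectrum ℂ A \ {z₀})))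
    (hCne : C.Nonempty) (hz₀C : z₀ ∉ C)
    (z₁ : ℂ) (hz₁ : z₁ ∈ C) (hz₁min : ∀ w ∈ C, ‖z₀ - z₁‖ ≤ ‖z₀ - w‖)
    (P : H →L[ℂ] H) (hPidem : P ∘L P = P) (hPsa : ContinuousLinearMap.adjoint P = P)
    (w₁ w₂ : ℂ) (hw : w₁ ≠ w₂)
    (η₁ : H) (hη₁ : η₁ ≠ 0) (hPη₁ : P η₁ = η₁) (heig₁ : P (A η₁) = w₁ • η₁)
    (η₂ : H) (hη₂ : η₂ ≠ 0) (hPη₂ : P η₂ = η₂) (heig₂ : P (A η₂) = w₂ • η₂) :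
    ((w₁ - z₁) * (starRingEnd ℂ) (z₀ - z₁)).re / ‖z₁ - z₀‖ ^ 2 +
      ((w₂ - z₁) * (starRingEnd ℂ) (z₀ - z₁)).re / ‖z₁ - z₀‖ ^ 2 ≤ 1 := by
  have hrank : Module.rank ℂ (Module.End.eigenspace (A : H →ₗ[ℂ] H) z₀) ≤ (1 : ℕ) := by
    rw [Nat.cast_one, rank_submodule_le_one_iff']
    refine ⟨φ, fun ψ hψ ↦ ?_⟩
    obtain ⟨c, rfl⟩ := hsimple ψ (Module.End.mem_eigenspace_iff.1 hψ)
    exact Submodule.smul_mem _ c (Submodule.mem_span_singleton_self φ)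
  have hη : LinearIndependent ℂ ![η₁, η₂] :=
    Module.End.eigenvectors_linearIndependent' (P ∘L A : H →ₗ[ℂ] H) ![w₁, w₂]
      (by simpa [Function.Injective, Fin.forall_fin_two] using ⟨hw, hw.symm⟩) _
      (by simp [Fin.forall_fin_two, Module.End.hasEigenvector_iff, *])
  simpa using stmt_6_general A hA z₀ 1 hrank C hC hz₀C z₁ hz₁ hz₁min P hPsa ![w₁, w₂] ![η₁, η₂] hη
    (by simp [Fin.forall_fin_two, *]) (by simp [Fin.forall_fin_two, *])
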